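/- arXiv:1904.07218 — 9 statements merged into one kernel-verified Lean document; each statement's English description precedes it below -/
import Mathlib

section
/- For every fractional marriage problem instance (G, B, {𝒯_g}) in which every tradeoff is a unit tradeoff, there exists a fractional marriage problem instance (G', B', {𝒯'_g}) in which every tradeoff is a unit tradeoff such that: every tradeoff set 𝒯'_g contains at most three tradeoffs; at most one tradeoff in each 𝒯'_g is fractional; every tradeoff set 𝒯'_g containing a fractional tradeoff consists of exactly two tradeoffs; and (G, B, {𝒯_g}) is solvable if and only if (G', B', {𝒯'_g}) is solvable. -/
/-!
Enumerate the tradeoffs of a girl `g` as `τ g 0, …, τ g (m g)`. The new instance keeps the old boys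
and adds, for each `g`, *private* boys `c (g, i)` with `i ≤ m g` and *chain* boys `d (g, j)` with
`j < m g`. Its girls are, for each `g` and each `i ≤ m g`,

* a *worker* with the two tradeoffs `δ_{c (g, i)}` and `τ g i` (extended by zero), and
* a *selector* with the integral tradeoffs `δ_{c (g, i)}` and `δ_{d (g, j)}` for the at most two
  chain boys with `i ∈ {j, j + 1}`.

The `m g + 1` selectors of `g` cannot all be accommodated by the `m g` chain boys, so one of them
occupies some `c (g, i)`; this forces the worker `(g, i)` to use `τ g i`, and these forced tradeoffs
form a solution of the old instance (`solvable_of_reduction`). Conversely, when `g` uses `τ g k`,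
the worker and the selector with index `k` take `τ g k` and `c (g, k)`, the other workers take their
private boys, and the other selectors match up with the chain boys along `Fin.succAbove k`
(`reduction_solvable`).
-/

attribute [local instance] Classical.propDecidable

/-- The tradeoff `δ_b`: value 1 at `b` and 0 elsewhere. -/
noncomputable def delta {B : Type} (b : B) : B → ℚ := fun b' => if b' = b then 1 else 0

/-- A tradeoff is a function `t : B → ℚ` with `0 ≤ t b ≤ 1` for every `b`. -/
def IsTradeoff {B : Type} (t : B → ℚ) : Prop := ∀ b, 0 ≤ t b ∧ t b ≤ 1

/-- A tradeoff is fractional if it is not equal to any `δ_b`. -/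
def Fractional {B : Type} (t : B → ℚ) : Prop := ∀ b, t ≠ delta b

/-- Solvability of a fractional marriage problem instance: one tradeoff can be chosen from each
girl's tradeoff set so that each boy is used a total amount of at most 1. -/
def Solvable {G B : Type} [Fintype G] [Fintype B] (𝒯 : G → Finset (B → ℚ)) : Prop :=
  ∃ f : G → B → ℚ, (∀ g, f g ∈ 𝒯 g) ∧ ∀ b, ∑ g, f g b ≤ 1

namespace FMP

variable {G B : Type} {m : G → ℕ}

/-- Boys of the reduced instance: old boys, private boys `c (g, i)`, chain boys `d (g, j)`. -/
abbrev Boy (B : Type) (m : G → ℕ) : Type := B ⊕ ((Σ g, Fin (m g + 1)) ⊕ (Σ g, Fin (m g)))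

/-- Girls of the reduced instance: workers (left) and selectors (right). -/
abbrev Girl (m : G → ℕ) : Type := (Σ g, Fin (m g + 1)) ⊕ (Σ g, Fin (m g + 1))

/-- The private boy shared by the worker and the selector with index `p`. -/
abbrev priv (p : Σ g, Fin (m g + 1)) : Boy B m := Sum.inr (Sum.inl p)

/-- The chain boy with index `q`, shared by two consecutive selectors. -/
abbrev chain (q : Σ g, Fin (m g)) : Boy B m := Sum.inr (Sum.inr q)

/-- Extension by zero of a tradeoff on the old boys to the new boys. -/
def lift (m : G → ℕ) (t : B → ℚ) : Boy B m → ℚ := Sum.elim t 0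

/-- Tradeoff sets of the reduced instance; `τ g` enumerates the tradeoffs of `g`. -/
noncomputable def reduction (τ : ∀ g, Fin (m g + 1) → B → ℚ) : Girl m → Finset (Boy B m → ℚ)
  | Sum.inl p => {delta (priv p), lift m (τ p.1 p.2)}
  | Sum.inr p => insert (delta (priv p))
      ((Finset.univ.filter fun j : Fin (m p.1) => j.castSucc = p.2 ∨ j.succ = p.2).image
        fun j => delta (chain ⟨p.1, j⟩))

lemma mem_reduction_inl {τ : ∀ g, Fin (m g + 1) → B → ℚ} {p t} :
    t ∈ reduction τ (Sum.inl p) ↔ t = delta (priv p) ∨ t = lift m (τ p.1 p.2) := by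
  simp [reduction]

lemma mem_reduction_inr {τ : ∀ g, Fin (m g + 1) → B → ℚ} {p t} :
    t ∈ reduction τ (Sum.inr p) ↔ t = delta (priv p) ∨
      ∃ j : Fin (m p.1), (j.castSucc = p.2 ∨ j.succ = p.2) ∧ t = delta (chain ⟨p.1, j⟩) := by
  simp [reduction, eq_comm]

lemma isTradeoff_delta (b : B) : IsTradeoff (delta b) := by
  intro b'
  unfold delta
  split_ifs <;> norm_num

lemma sum_delta [Fintype B] (b : B) : ∑ b', delta b b' = 1 := by
  simp [delta]

lemma isTradeoff_lift {t : B → ℚ} (ht : IsTradeoff t) : IsTradeoff (lift m t) := by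
  rintro (b | b)
  · exact ht b
  · simp [lift]

lemma sum_lift [Fintype G] [Fintype B] (t : B → ℚ) : ∑ b, lift m t b = ∑ b, t b := by
  simp [lift]

section Shape

variable {τ : ∀ g, Fin (m g + 1) → B → ℚ}

lemma isTradeoff_of_mem (hτ : ∀ g i, IsTradeoff (τ g i)) {x t} (ht : t ∈ reduction τ x) :
    IsTradeoff t := by
  rcases x with p | p
  · rcases mem_reduction_inl.1 ht with rfl | rfl
    · exact isTradeoff_delta _
    · exact isTradeoff_lift (hτ _ _)
  · rcases mem_reduction_inr.1 ht with rfl | ⟨j, -, rfl⟩ <;> exact isTradeoff_delta _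

lemma sum_of_mem [Fintype G] [Fintype B] (hτ : ∀ g i, ∑ b, τ g i b = 1) {x t}
    (ht : t ∈ reduction τ x) : ∑ b, t b = 1 := by
  rcases x with p | p
  · rcases mem_reduction_inl.1 ht with rfl | rfl
    · exact sum_delta _
    · rw [sum_lift, hτ]
  · rcases mem_reduction_inr.1 ht with rfl | ⟨j, -, rfl⟩ <;> exact sum_delta _

lemma card_reduction_le (x : Girl m) : (reduction τ x).card ≤ 3 := by
  rcases x with p | p
  · exact Finset.card_le_two.trans (by norm_num)
  · refine (Finset.card_insert_le _ _).trans (Nat.succ_le_succ (Finset.card_image_le.trans ?_))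
    rw [Finset.filter_or]
    refine (Finset.card_union_le _ _).trans (Nat.add_le_add (b := 1) (d := 1) ?_ ?_)
    · refine Finset.card_le_one.2 fun a ha b hb => ?_
      simp only [Finset.mem_filter] at ha hb
      exact Fin.castSucc_injective _ (ha.2.trans hb.2.symm)
    · refine Finset.card_le_one.2 fun a ha b hb => ?_
      simp only [Finset.mem_filter] at ha hb
      exact Fin.succ_injective _ (ha.2.trans hb.2.symm)

/-- Only workers have fractional tradeoffs, and then only the extended old tradeoff. -/
lemma fractional_mem {x t} (ht : t ∈ reduction τ x) (hf : Fractional t) :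
    ∃ p, x = Sum.inl p ∧ t = lift m (τ p.1 p.2) := by
  rcases x with p | p
  · rcases mem_reduction_inl.1 ht with rfl | rfl
    · exact absurd rfl (hf _)
    · exact ⟨p, rfl, rfl⟩
  · rcases mem_reduction_inr.1 ht with rfl | ⟨j, -, rfl⟩ <;> exact absurd rfl (hf _)

lemma card_eq_two {x t} (ht : t ∈ reduction τ x) (hf : Fractional t) :
    (reduction τ x).card = 2 := by
  obtain ⟨p, rfl, rfl⟩ := fractional_mem ht hf
  exact Finset.card_pair (hf _).symm

end Shape

/-- Two girls cannot both use the same boy fully. -/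
lemma eq_of_apply_eq_one {ι : Type} [Fintype ι] {f : ι → B → ℚ} (h0 : ∀ i b, 0 ≤ f i b)
    {b : B} (h : ∑ i, f i b ≤ 1) {i j : ι} (hi : f i b = 1) (hj : f j b = 1) : i = j := by
  by_contra hij
  have h2 := Finset.sum_le_univ_sum_of_nonneg (s := {i, j}) (fun i => h0 i b)
  rw [Finset.sum_pair hij, hi, hj] at h2
  linarith

lemma delta_self (b : B) : delta b b = 1 := by simp [delta]

lemma solvable_of_reduction [Fintype G] [Fintype B] {𝒯 : G → Finset (B → ℚ)}
    {τ : ∀ g, Fin (m g + 1) → B → ℚ} (hmem : ∀ g i, τ g i ∈ 𝒯 g)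
    (hτ : ∀ g i, IsTradeoff (τ g i)) (h : Solvable (reduction τ)) : Solvable 𝒯 := by
  obtain ⟨f, hf, hsum⟩ := h
  have h0 : ∀ x b, 0 ≤ f x b := fun x b => (isTradeoff_of_mem hτ (hf x) b).1
  have key : ∀ g, ∃ i, f (Sum.inl ⟨g, i⟩) = lift m (τ g i) := by
    intro g
    by_contra! hno
    have hw : ∀ i, f (Sum.inl ⟨g, i⟩) = delta (priv ⟨g, i⟩) := fun i =>
      (mem_reduction_inl.1 (hf _)).resolve_right (hno i)
    have hs : ∀ i, ∃ j : Fin (m g), f (Sum.inr ⟨g, i⟩) = delta (chain ⟨g, j⟩) := by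
      intro i
      rcases mem_reduction_inr.1 (hf (Sum.inr ⟨g, i⟩)) with h | ⟨j, -, h⟩
      · have := eq_of_apply_eq_one h0 (hsum (priv ⟨g, i⟩)) (i := Sum.inl ⟨g, i⟩)
          (j := Sum.inr ⟨g, i⟩) (by rw [hw, delta_self]) (by rw [h, delta_self])
        simp at this
      · exact ⟨j, h⟩
    choose J hJ using hs
    obtain ⟨i, i', hne, heq⟩ := Fintype.exists_ne_map_eq_of_card_lt J (by simp)
    have := eq_of_apply_eq_one h0 (hsum (chain ⟨g, J i⟩)) (i := Sum.inr ⟨g, i⟩)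
      (j := Sum.inr ⟨g, i'⟩) (by rw [hJ, delta_self]) (by rw [hJ, ← heq, delta_self])
    simp [hne] at this
  choose k hk using key
  refine ⟨fun g => τ g (k g), fun g => hmem _ _, fun b => ?_⟩
  have hinj : Function.Injective fun g => (Sum.inl ⟨g, k g⟩ : Girl m) := by
    intro g g' hgg
    simp only [Sum.inl.injEq, Sigma.mk.injEq] at hgg
    exact hgg.1
  calc ∑ g, τ g (k g) b = ∑ g, f (Sum.inl ⟨g, k g⟩) (Sum.inl b) := by simp [hk, lift]
    _ = ∑ x ∈ Finset.univ.map ⟨_, hinj⟩, f x (Sum.inl b) := by simp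
    _ ≤ ∑ x, f x (Sum.inl b) := Finset.sum_le_univ_sum_of_nonneg fun x => h0 x _
    _ ≤ 1 := hsum _

/-- Solution of the reduced instance in which `g` selects the index `k g`. -/
noncomputable def sol (τ : ∀ g, Fin (m g + 1) → B → ℚ) (k : ∀ g, Fin (m g + 1)) :
    Girl m → Boy B m → ℚ
  | Sum.inl ⟨g, i⟩ => (k g).insertNth (α := fun _ => Boy B m → ℚ) (lift m (τ g (k g)))
      (fun j => delta (priv ⟨g, (k g).succAbove j⟩)) i
  | Sum.inr ⟨g, i⟩ => delta ((k g).insertNth (α := fun _ => Boy B m) (priv ⟨g, k g⟩)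
      (fun j => chain ⟨g, j⟩) i)

lemma sol_mem (τ : ∀ g, Fin (m g + 1) → B → ℚ) (k : ∀ g, Fin (m g + 1)) (x : Girl m) :
    sol τ k x ∈ reduction τ x := by
  rcases x with ⟨g, i⟩ | ⟨g, i⟩
  · rw [mem_reduction_inl]
    rcases Fin.eq_self_or_eq_succAbove (k g) i with rfl | ⟨j, rfl⟩ <;> simp [sol]
  · rw [mem_reduction_inr]
    rcases Fin.eq_self_or_eq_succAbove (k g) i with rfl | ⟨j, rfl⟩
    · simp [sol]
    · refine Or.inr ⟨j, ?_, by simp [sol]⟩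
      simp only [Fin.succAbove]
      split_ifs <;> simp

/-- The load of a boy under `sol`, split over the old girls. -/
lemma sum_sol [Fintype G] (τ : ∀ g, Fin (m g + 1) → B → ℚ) (k : ∀ g, Fin (m g + 1))
    (b : Boy B m) :
    ∑ x, sol τ k x b = ∑ g, (lift m (τ g (k g)) b + ∑ i, delta (priv ⟨g, i⟩) b +
      ∑ j, delta (chain ⟨g, j⟩) b) := by
  rw [Fintype.sum_sum_type, Fintype.sum_sigma, Fintype.sum_sigma, ← Finset.sum_add_distrib]
  refine Finset.sum_congr rfl fun g _ => ?_
  rw [Fin.sum_univ_succAbove _ (k g), Fin.sum_univ_succAbove _ (k g),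
    Fin.sum_univ_succAbove _ (k g)]
  simp only [sol, Fin.insertNth_apply_same, Fin.insertNth_apply_succAbove]
  ring

lemma reduction_solvable [Fintype G] [Fintype B] {𝒯 : G → Finset (B → ℚ)}
    {τ : ∀ g, Fin (m g + 1) → B → ℚ} (hsurj : ∀ g, ∀ t ∈ 𝒯 g, ∃ i, τ g i = t)
    (h : Solvable 𝒯) : Solvable (reduction τ) := by
  obtain ⟨f, hf, hsum⟩ := h
  choose k hk using fun g => hsurj g (f g) (hf g)
  refine ⟨sol τ k, sol_mem τ k, fun b => ?_⟩
  rw [sum_sol]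
  simp only [Finset.sum_add_distrib, ← Fintype.sum_sigma']
  rcases b with b | p | q
  · simpa [lift, delta, hk] using hsum b
  · simp [lift, delta]
  · simp [lift, delta]

end FMP

theorem first_normal_form {G B : Type} [Fintype G] [Fintype B]
    (𝒯 : G → Finset (B → ℚ))
    (hne : ∀ g, (𝒯 g).Nonempty)
    (htr : ∀ g, ∀ t ∈ 𝒯 g, IsTradeoff t)
    (hunit : ∀ g, ∀ t ∈ 𝒯 g, ∑ b, t b = 1) :
    ∃ (G' B' : Type) (iG : Fintype G') (iB : Fintype B') (𝒯' : G' → Finset (B' → ℚ)),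
      (∀ g, (𝒯' g).Nonempty) ∧
      (∀ g, ∀ t ∈ 𝒯' g, IsTradeoff t) ∧
      (∀ g, ∀ t ∈ 𝒯' g, ∑ b, t b = 1) ∧
      (∀ g, (𝒯' g).card ≤ 3) ∧
      (∀ g, ∀ t₁ ∈ 𝒯' g, ∀ t₂ ∈ 𝒯' g, Fractional t₁ → Fractional t₂ → t₁ = t₂) ∧
      (∀ g, (∃ t ∈ 𝒯' g, Fractional t) → (𝒯' g).card = 2) ∧
      (Solvable 𝒯 ↔ Solvable 𝒯') := by
  have henum : ∀ g, ∃ (n : ℕ) (σ : Fin (n + 1) → B → ℚ),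
      (∀ i, σ i ∈ 𝒯 g) ∧ ∀ t ∈ 𝒯 g, ∃ i, σ i = t := by
    intro g
    obtain ⟨n, hn⟩ := Nat.exists_eq_succ_of_ne_zero (hne g).card_pos.ne'
    let e := (𝒯 g).equivFinOfCardEq hn
    exact ⟨n, fun i => (e.symm i : B → ℚ), fun i => (e.symm i).2,
      fun t ht => ⟨e ⟨t, ht⟩, by simp⟩⟩
  choose m τ hmem hsurj using henum
  have hτ : ∀ g i, IsTradeoff (τ g i) := fun g i => htr g _ (hmem g i)
  refine ⟨FMP.Girl m, FMP.Boy B m, inferInstance, inferInstance, FMP.reduction τ, ?_,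
    fun x t ht => FMP.isTradeoff_of_mem hτ ht,
    fun x t ht => FMP.sum_of_mem (fun g i => hunit g _ (hmem g i)) ht,
    FMP.card_reduction_le, ?_, fun x ⟨t, ht, hf⟩ => FMP.card_eq_two ht hf,
    FMP.reduction_solvable hsurj, FMP.solvable_of_reduction hmem hτ⟩
  · exact fun x => ⟨_, FMP.sol_mem τ (fun _ => 0) x⟩
  · intro x t₁ h₁ t₂ h₂ hf₁ hf₂
    obtain ⟨p, rfl, rfl⟩ := FMP.fractional_mem h₁ hf₁
    obtain ⟨q, hq, rfl⟩ := FMP.fractional_mem h₂ hf₂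
    cases hq
    rfl
end

section
/- Let (G, B, {𝒯_g}) be a fractional marriage problem instance, let g₀ ∈ G, and suppose 𝒯_{g₀} = S₁ ∪ S₂ with S₁ and S₂ nonempty. Let b* be a fresh boy not in B, and let g₁, g₂ be fresh girls. Form the instance over girls (G \ {g₀}) ∪ {g₁, g₂} and boys B ∪ {b*}, where every tradeoff of the original instance is extended by the value 0 on b*, the girls of G \ {g₀} keep their tradeoff sets, 𝒯_{g₁} = S₁ ∪ {δ_{b*}}, and 𝒯_{g₂} = S₂ ∪ {δ_{b*}}. Then the new instance is solvable if and only if (G, B, {𝒯_g}) is solvable. -/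
/-!
A solution of the split instance cannot give `δ_{b*}` to both new girls, since `b*` would then
receive `2`. Hence some new girl `i` uses an extended tradeoff from her half `S_i`, and that tradeoff
can be handed to `g₀`; the discarded girl only contributed nonnegative amounts. Conversely, in a
solution of the original instance the tradeoff of `g₀` lies in one half `S_i`: the new girl `i` takes
it and the other one takes `δ_{b*}`.
-/

attribute [local instance] Classical.propDecidable

/-- Splitting the tradeoff set of a single girl `g₀` into two halves, each augmented with a
fresh boy `b*`, preserves solvability. -/
theorem split_tradeoff_set {G B : Type} [Fintype G] [Fintype B]
    (𝒯 : G → Finset (B → ℚ))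
    (hne : ∀ g, (𝒯 g).Nonempty)
    (htr : ∀ g, ∀ t ∈ 𝒯 g, IsTradeoff t)
    (g₀ : G) (S₁ S₂ : Finset (B → ℚ))
    (hsplit : 𝒯 g₀ = S₁ ∪ S₂) (h₁ : S₁.Nonempty) (h₂ : S₂.Nonempty) :
    Solvable (G := {g : G // g ≠ g₀} ⊕ Fin 2) (B := B ⊕ Unit)
      (Sum.elim
        (fun g => (𝒯 g.1).image (fun t => Sum.elim t 0))
        (fun i => ((if i = 0 then S₁ else S₂).image (fun t => Sum.elim t 0)) ∪
          {delta (Sum.inr ())}))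
      ↔ Solvable 𝒯 := by
  have hsub : ∀ i : Fin 2, ∀ t ∈ (if i = 0 then S₁ else S₂), t ∈ 𝒯 g₀ := by
    intro i t ht
    rw [hsplit, Finset.mem_union]
    split_ifs at ht
    · exact Or.inl ht
    · exact Or.inr ht
  constructor
  · rintro ⟨f, hf, hsum⟩
    have hl : ∀ g : {g : G // g ≠ g₀}, ∃ t ∈ 𝒯 g.1, Sum.elim t 0 = f (Sum.inl g) := by
      intro g
      have := hf (Sum.inl g)
      rw [Sum.elim_inl, Finset.mem_image] at this
      exact this
    have hr : ∀ i : Fin 2, (∃ t ∈ (if i = 0 then S₁ else S₂), Sum.elim t 0 = f (Sum.inr i)) ∨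
        f (Sum.inr i) = delta (Sum.inr ()) := by
      intro i
      have := hf (Sum.inr i)
      rw [Sum.elim_inr, Finset.mem_union, Finset.mem_image, Finset.mem_singleton] at this
      exact this
    have hnn : ∀ i b, 0 ≤ f (Sum.inr i) (Sum.inl b) := by
      intro i b
      rcases hr i with ⟨t, ht, he⟩ | he
      · rw [← he]
        exact (htr g₀ t (hsub i t ht) b).1
      · rw [he]
        simp [delta]
    have hex : ∃ i : Fin 2, ∃ t ∈ (if i = 0 then S₁ else S₂), Sum.elim t 0 = f (Sum.inr i) := by
      by_contra hcon
      have hd : ∀ i, f (Sum.inr i) = delta (Sum.inr ()) := fun i =>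
        (hr i).resolve_left fun h => hcon ⟨i, h⟩
      have hz : ∀ g, f (Sum.inl g) (Sum.inr ()) = 0 := by
        intro g
        obtain ⟨t, -, he⟩ := hl g
        rw [← he]
        rfl
      have hs := hsum (Sum.inr ())
      rw [Fintype.sum_sum_type] at hs
      simp only [hd, hz] at hs
      norm_num [delta] at hs
    obtain ⟨i, t, ht, he⟩ := hex
    choose u hu hue using hl
    refine ⟨fun g => if h : g ≠ g₀ then u ⟨g, h⟩ else t, fun g => ?_, fun b => ?_⟩
    · by_cases h : g = g₀
      · subst h
        simpa using hsub i t ht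
      · simpa [h] using hu ⟨g, h⟩
    · have hs := hsum (Sum.inl b)
      rw [Fintype.sum_sum_type] at hs
      rw [Fintype.sum_eq_add_sum_subtype_ne _ g₀]
      have hle : f (Sum.inr i) (Sum.inl b) ≤ ∑ j, f (Sum.inr j) (Sum.inl b) :=
        Finset.single_le_sum (f := fun j => f (Sum.inr j) (Sum.inl b))
          (fun j _ => hnn j b) (Finset.mem_univ i)
      have hrest : ∑ g : {g : G // g ≠ g₀}, (if h : g.1 ≠ g₀ then u ⟨g.1, h⟩ else t) b
          = ∑ g, f (Sum.inl g) (Sum.inl b) :=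
        Finset.sum_congr rfl fun g _ => by
          rw [dif_pos g.2, ← hue]
          rfl
      have ht' : t b = f (Sum.inr i) (Sum.inl b) := by
        rw [← he]
        rfl
      rw [hrest]
      beta_reduce
      rw [dif_neg (not_not.mpr rfl), ht']
      linarith
  · rintro ⟨f, hf, hsum⟩
    have hex : ∃ i : Fin 2, f g₀ ∈ (if i = 0 then S₁ else S₂) := by
      have := hf g₀
      rw [hsplit, Finset.mem_union] at this
      rcases this with h | h
      · exact ⟨0, by simpa using h⟩
      · exact ⟨1, by simpa using h⟩
    obtain ⟨i, hi⟩ := hex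
    refine ⟨Sum.elim (fun g => Sum.elim (f g.1) 0)
      (fun j => if j = i then Sum.elim (f g₀) 0 else delta (Sum.inr ())), ?_, ?_⟩
    · rintro (g | j)
      · rw [Sum.elim_inl, Sum.elim_inl]
        exact Finset.mem_image_of_mem _ (hf g.1)
      · rw [Sum.elim_inr, Sum.elim_inr, Finset.mem_union]
        by_cases h : j = i
        · subst h
          rw [if_pos rfl]
          exact Or.inl (Finset.mem_image_of_mem _ hi)
        · rw [if_neg h]
          exact Or.inr (Finset.mem_singleton_self _)
    · rintro (b | u)
      · have hs := hsum b
        rw [Fintype.sum_eq_add_sum_subtype_ne _ g₀] at hs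
        rw [Fintype.sum_sum_type, Fin.sum_univ_two]
        fin_cases i <;> simp [delta] <;> linarith
      · rw [Fintype.sum_sum_type, Fin.sum_univ_two]
        fin_cases i <;> simp [delta]
end

section
/- Let (G, B, {𝒯_g}) be a fractional marriage problem instance, let g₀ ∈ G with 𝒯_{g₀} = {t_1, ..., t_N}, let b*_1, ..., b*_N be fresh boys not in B, and let g_1, ..., g_{N+1} be fresh girls. Form the instance over girls (G \ {g₀}) ∪ {g_1, ..., g_{N+1}} and boys B ∪ {b*_1, ..., b*_N}, where every original tradeoff is extended by 0 on the new boys, the girls of G \ {g₀} keep their tradeoff sets, 𝒯_{g_i} = {t_i, δ_{b*_i}} for 1 ≤ i ≤ N, and 𝒯_{g_{N+1}} = {δ_{b*_1}, ..., δ_{b*_N}}. Then the new instance is solvable if and only if (G, B, {𝒯_g}) is solvable. -/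
/-!
The girl `g_{N+1}` takes `δ_{b*_j}` for exactly one index `j`. This fills the boy `b*_j`, so `g_j`
is forced to take `t_j`; every other `g_i` may retreat to `δ_{b*_i}`, which costs the original boys
nothing. So a solution of the new instance yields one of the old instance by letting `g₀` take
`t_j` (nonnegativity of tradeoffs lets the loads of the remaining fresh girls be dropped), and
conversely a solution in which `g₀` takes `t_j` extends by giving `t_j` to `g_j`, `δ_{b*_j}` to
`g_{N+1}` and `δ_{b*_i}` to `g_i` for `i ≠ j`.
-/

attribute [local instance] Classical.propDecidable

/-- Replacing the tradeoff set `{t_1, ..., t_N}` of a girl `g₀` by the family of tradeoff sets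
`{t_i, δ_{b*_i}}` (for fresh girls `g_1, ..., g_N` and fresh boys `b*_1, ..., b*_N`) together
with `{δ_{b*_1}, ..., δ_{b*_N}}` (for a fresh girl `g_{N+1}`) preserves solvability. -/
theorem split_into_pairs {G B : Type} [Fintype G] [Fintype B]
    (𝒯 : G → Finset (B → ℚ))
    (hne : ∀ g, (𝒯 g).Nonempty)
    (htr : ∀ g, ∀ t ∈ 𝒯 g, IsTradeoff t)
    (g₀ : G) (N : ℕ) (hN : 1 ≤ N)
    (ts : Fin N → (B → ℚ)) (hts : Function.Injective ts)
    (hT₀ : 𝒯 g₀ = Finset.image ts Finset.univ) :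
    Solvable (G := {g : G // g ≠ g₀} ⊕ Fin (N + 1)) (B := B ⊕ Fin N)
      (Sum.elim
        (fun g => (𝒯 g.1).image (fun t => Sum.elim t 0))
        (fun i => Fin.lastCases
          (Finset.image (fun j : Fin N => delta (Sum.inr j)) Finset.univ)
          (fun j => {Sum.elim (ts j) 0, delta (Sum.inr j)}) i))
      ↔ Solvable 𝒯 := by
  have hsplit : ∀ F : G → ℚ, ∑ g, F g = F g₀ + ∑ g : {g : G // g ≠ g₀}, F g := by
    intro F
    convert Fintype.sum_eq_add_sum_subtype_ne F g₀
  have hts0 : ∀ j b, 0 ≤ ts j b := fun j b =>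
    (htr g₀ (ts j) (by rw [hT₀]; exact Finset.mem_image_of_mem _ (Finset.mem_univ j)) b).1
  constructor
  · rintro ⟨f, hf, hs⟩
    have hold : ∀ g : {g : G // g ≠ g₀}, ∃ t ∈ 𝒯 g.1, Sum.elim t 0 = f (Sum.inl g) := by
      intro g
      simpa using hf (Sum.inl g)
    have hlast : ∃ j : Fin N, delta (Sum.inr j) = f (Sum.inr (Fin.last N)) := by
      simpa using hf (Sum.inr (Fin.last N))
    have hpair : ∀ i : Fin N, f (Sum.inr i.castSucc) = Sum.elim (ts i) 0 ∨
        f (Sum.inr i.castSucc) = delta (Sum.inr i) := by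
      intro i
      simpa using hf (Sum.inr i.castSucc)
    choose t ht hft using hold
    obtain ⟨j, hj⟩ := hlast
    have hpair0 : ∀ (i : Fin N) b, 0 ≤ f (Sum.inr i.castSucc) b := by
      intro i b
      rcases hpair i with h | h <;> rw [h]
      · rcases b with b | b
        · exact hts0 i b
        · exact le_rfl
      · unfold delta; split_ifs <;> norm_num
    have hold0 : ∀ g b, 0 ≤ f (Sum.inl g) b := by
      intro g b
      rw [← hft g]
      rcases b with b | b
      · exact (htr _ _ (ht g) b).1
      · exact le_rfl
    -- Two girls taking `δ_{b*_j}` would load the boy `b*_j` with at least 2.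
    have hforced : f (Sum.inr j.castSucc) = Sum.elim (ts j) 0 := by
      rcases hpair j with h | h
      · exact h
      · exfalso
        have h1 := hs (Sum.inr j)
        rw [Fintype.sum_sum_type, Fin.sum_univ_castSucc, ← hj] at h1
        have h2 : 0 ≤ ∑ g, f (Sum.inl g) (Sum.inr j) :=
          Finset.sum_nonneg fun g _ => hold0 g _
        have h3 : f (Sum.inr j.castSucc) (Sum.inr j) ≤
            ∑ i : Fin N, f (Sum.inr i.castSucc) (Sum.inr j) :=
          Finset.single_le_sum (f := fun i : Fin N => f (Sum.inr i.castSucc) (Sum.inr j))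
            (fun i _ => hpair0 i _) (Finset.mem_univ j)
        rw [h] at h3
        simp only [delta, if_true] at h1 h3
        linarith
    refine ⟨fun g => if h : g = g₀ then ts j else t ⟨g, h⟩, ?_, ?_⟩
    · intro g
      by_cases h : g = g₀
      · subst h
        simp [hT₀]
      · simpa [h] using ht ⟨g, h⟩
    · intro b
      have h1 := hs (Sum.inl b)
      rw [Fintype.sum_sum_type, Fin.sum_univ_castSucc, ← hj] at h1
      have h3 : f (Sum.inr j.castSucc) (Sum.inl b) ≤
          ∑ i : Fin N, f (Sum.inr i.castSucc) (Sum.inl b) :=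
        Finset.single_le_sum (f := fun i : Fin N => f (Sum.inr i.castSucc) (Sum.inl b))
          (fun i _ => hpair0 i _) (Finset.mem_univ j)
      rw [hforced] at h3
      have h4 : ∑ g : {g : G // g ≠ g₀}, f (Sum.inl g) (Sum.inl b) = ∑ g, t g b :=
        Finset.sum_congr rfl fun g _ => by rw [← hft g]; rfl
      have h5 : ∑ g : {g : G // g ≠ g₀}, (if h : g.1 = g₀ then ts j else t ⟨g.1, h⟩) b =
          ∑ g, t g b :=
        Finset.sum_congr rfl fun g _ => by rw [dif_neg g.2]
      rw [hsplit, h5]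
      simp only [delta, reduceCtorEq, if_false, Sum.elim_inl, dif_pos] at h1 h3 ⊢
      linarith
  · rintro ⟨f, hf, hs⟩
    obtain ⟨j, hj⟩ : ∃ j, ts j = f g₀ := by
      have := hf g₀
      rw [hT₀] at this
      simpa using this
    refine ⟨Sum.elim (fun g => Sum.elim (f g.1) 0) (fun i => Fin.lastCases (delta (Sum.inr j))
      (fun i => if i = j then Sum.elim (ts j) 0 else delta (Sum.inr i)) i), ?_, ?_⟩
    · rintro (g | i)
      · simpa using ⟨f g.1, hf g.1, rfl⟩
      · induction i using Fin.lastCases with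
        | last => simp
        | cast i =>
          by_cases h : i = j
          · subst h; simp
          · simp [h]
    · rintro (b | k)
      · have h1 := hs b
        rw [hsplit, ← hj] at h1
        have h2 : ∀ i : Fin N, (if i = j then (Sum.elim (ts j) 0 : B ⊕ Fin N → ℚ)
            else delta (Sum.inr i)) (Sum.inl b) = if i = j then ts j b else 0 := by
          intro i
          split_ifs <;> simp [delta]
        rw [Fintype.sum_sum_type, Fin.sum_univ_castSucc]
        simp only [Sum.elim_inl, Sum.elim_inr, Fin.lastCases_last, Fin.lastCases_castSucc, h2,
          Finset.sum_ite_eq', Finset.mem_univ, if_true]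
        simp only [delta, reduceCtorEq, if_false]
        linarith
      -- The boy `b*_k` is loaded by `g_k` if `k ≠ j`, and by `g_{N+1}` if `k = j`.
      · have h2 : ∀ i : Fin N, (if i = j then (Sum.elim (ts j) 0 : B ⊕ Fin N → ℚ)
            else delta (Sum.inr i)) (Sum.inr k) = if i = k then (if k = j then 0 else 1) else 0 := by
          intro i
          unfold delta
          by_cases h : i = j <;> by_cases h' : i = k <;> simp_all [eq_comm]
        rw [Fintype.sum_sum_type, Fin.sum_univ_castSucc]
        simp only [Sum.elim_inl, Sum.elim_inr, Fin.lastCases_last, Fin.lastCases_castSucc, h2,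
          Finset.sum_ite_eq', Finset.mem_univ, if_true]
        by_cases h : k = j <;> simp [delta, h]
end

section
/- Consider the CNF formula φ over the nine Boolean variables b11, b12, b14, b21, b23, b31, b32, b43, b44 whose clauses are: (b11 ∨ b21 ∨ b31), (¬b12 ∨ b21 ∨ b31), (¬b14 ∨ b21 ∨ b31), (b11 ∨ ¬b23 ∨ b31), (¬b12 ∨ ¬b23 ∨ b31), (¬b14 ∨ ¬b23 ∨ b31), (b11 ∨ b21 ∨ ¬b32), (¬b12 ∨ b21 ∨ ¬b32), (¬b14 ∨ b21 ∨ ¬b32), (b11 ∨ ¬b23 ∨ ¬b32), (¬b12 ∨ ¬b23 ∨ ¬b32), (¬b14 ∨ ¬b23 ∨ ¬b32), (¬b11 ∨ ¬b31), (b12 ∨ ¬b31), (¬b14 ∨ ¬b31), (¬b11 ∨ b32), (b12 ∨ b32), (¬b14 ∨ b32), (¬b21 ∨ b43), (b23 ∨ b43), (¬b21 ∨ ¬b44), (b23 ∨ ¬b44), (¬b11 ∨ ¬b43), (¬b12 ∨ ¬b43), (b14 ∨ ¬b43), (¬b11 ∨ b44), (¬b12 ∨ b44), (b14 ∨ b44).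 Then φ is not Horn-rewritable: there is no function s from the set of variables to Bool such that, after flipping the polarity throughout φ of every literal whose variable x has s x = true, every clause of the resulting formula contains at most one positive literal. -/
/-!
Suppose a flipping `s` makes `φ` Horn, and call a literal *positive* if it is positive after
flipping; of `x` and `¬x` exactly one is positive, and no two literals of a clause are.
Six clauses already give a contradiction, by following the forced polarities from `b31`.

* If `b31` is positive, then `b11 ∨ b21 ∨ b31` makes `¬b11` and `¬b21` positive, so `¬b21 ∨ b43`
  makes `¬b43` positive, and `¬b11 ∨ ¬b43` has two positive literals.
* If `¬b31` is positive, then `¬b11 ∨ ¬b31` and `¬b14 ∨ ¬b31` make `b11` and `b14` positive, so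
  `b11 ∨ b21 ∨ b31` makes `¬b21` positive, `¬b21 ∨ b43` makes `¬b43` positive, and
  `b14 ∨ ¬b43` has two positive literals.
-/

/-- The clauses of the CNF formula `φ` over the nine variables
`b11, b12, b14, b21, b23, b31, b32, b43, b44`, encoded as indices
`0, 1, 2, 3, 4, 5, 6, 7, 8` of `Fin 9`. A literal is a pair `(x, pol)` where
`pol = true` means the positive literal `x` and `pol = false` means `¬x`. -/
def phiClauses : List (List (Fin 9 × Bool)) :=
  [ [(0, true), (3, true), (5, true)],
    [(1, false), (3, true), (5, true)],
    [(2, false), (3, true), (5, true)],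
    [(0, true), (4, false), (5, true)],
    [(1, false), (4, false), (5, true)],
    [(2, false), (4, false), (5, true)],
    [(0, true), (3, true), (6, false)],
    [(1, false), (3, true), (6, false)],
    [(2, false), (3, true), (6, false)],
    [(0, true), (4, false), (6, false)],
    [(1, false), (4, false), (6, false)],
    [(2, false), (4, false), (6, false)],
    [(0, false), (5, false)],
    [(1, true), (5, false)],
    [(2, false), (5, false)],
    [(0, false), (6, true)],
    [(1, true), (6, true)],
    [(2, false), (6, true)],
    [(3, false), (7, true)],
    [(4, true), (7, true)],
    [(3, false), (8, false)],
    [(4, true), (8, false)],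
    [(0, false), (7, false)],
    [(1, false), (7, false)],
    [(2, true), (7, false)],
    [(0, false), (8, true)],
    [(1, false), (8, true)],
    [(2, true), (8, true)] ]

/-- `φ` is not Horn-rewritable: there is no polarity-flipping assignment
`s : Fin 9 → Bool` (flip the polarity of variable `x` throughout `φ` iff `s x = true`) such
that afterwards every clause contains at most one positive literal. -/
theorem phi_not_horn_rewritable :
    ¬ ∃ s : Fin 9 → Bool,
      ∀ c ∈ phiClauses, (c.countP fun l => Bool.xor l.2 (s l.1)) ≤ 1 := by
  rintro ⟨s, hs⟩
  have h1 := hs [(0, true), (3, true), (5, true)] (by simp [phiClauses])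
  have h2 := hs [(0, false), (5, false)] (by simp [phiClauses])
  have h3 := hs [(2, false), (5, false)] (by simp [phiClauses])
  have h4 := hs [(3, false), (7, true)] (by simp [phiClauses])
  have h5 := hs [(0, false), (7, false)] (by simp [phiClauses])
  have h6 := hs [(2, true), (7, false)] (by simp [phiClauses])
  -- Only the flips of `b31`, `b11`, `b14`, `b21` and `b43` enter these six clauses.
  cases e5 : s 5 <;> cases e0 : s 0 <;> cases e2 : s 2 <;> cases e3 : s 3 <;> cases e7 : s 7 <;>
    simp [e0, e2, e3, e5, e7] at h1 h2 h3 h4 h5 h6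
end

section
/- There is no finite set Y of auxiliary Boolean variables disjoint from {x₁, x₂, x₃} and no CNF formula ψ over the variables {x₁, x₂, x₃} ∪ Y in which every clause contains at most two literals, such that for every assignment α : {x₁, x₂, x₃} → Bool the following holds: (α x₁ ∨ α x₂ ∨ α x₃) = true if and only if there exists β : Y → Bool such that the combined assignment of α and β satisfies ψ. -/
/-!
The majority operation is a polymorphism of every 2-CNF formula: if three assignments satisfy a
clause with at most two literals, then by pigeonhole two of them make the same literal true, and so
does their pointwise majority (`exists_literal_maj`). Satisfiability is therefore preserved by
majority also after projecting away the auxiliary variables. The disjunction of three variables is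
not preserved: it holds at `100`, `010` and `001`, whose majority is `000`.
-/

/-- The majority of three Boolean values. -/
def maj (a b c : Bool) : Bool := (a && b) || (a && c) || (b && c)

theorem exists_literal_maj {V : Type} (σ₁ σ₂ σ₃ : V → Bool) (c : List (V × Bool))
    (hc : c.length ≤ 2) (h₁ : ∃ l ∈ c, σ₁ l.1 = l.2) (h₂ : ∃ l ∈ c, σ₂ l.1 = l.2)
    (h₃ : ∃ l ∈ c, σ₃ l.1 = l.2) :
    ∃ l ∈ c, maj (σ₁ l.1) (σ₂ l.1) (σ₃ l.1) = l.2 := by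
  match c, hc with
  | [], _ => simp at h₁
  | [l], _ =>
    simp only [List.mem_singleton, exists_eq_left] at *
    rw [h₁, h₂, h₃]
    cases l.2 <;> rfl
  | [l, m], _ =>
    simp only [List.mem_cons, List.not_mem_nil, or_false, exists_eq_or_imp, exists_eq_left] at *
    generalize σ₁ l.1 = a₁ at *
    generalize σ₂ l.1 = a₂ at *
    generalize σ₃ l.1 = a₃ at *
    generalize σ₁ m.1 = b₁ at *
    generalize σ₂ m.1 = b₂ at *
    generalize σ₃ m.1 = b₃ at *
    generalize l.2 = p at *
    generalize m.2 = q at *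
    revert a₁ a₂ a₃ b₁ b₂ b₃ p q
    decide
  | _ :: _ :: _ :: _, hc => simp at hc

/-- There is no 2-CNF formula `ψ`, over the variables `x₁, x₂, x₃` (encoded as `Fin 3`)
together with a finite set `Y` of auxiliary variables, such that for every assignment
`α` of `x₁, x₂, x₃`, the disjunction `x₁ ∨ x₂ ∨ x₃` holds under `α` iff `ψ` is satisfied by
the combination of `α` with some assignment `β` of the auxiliary variables.

A CNF formula is encoded as a list of clauses, a clause as a list of literals, and a literal
as a pair `(v, pol)` (`pol = true` for the positive literal `v`, `pol = false` for `¬v`);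
an assignment `σ` makes the literal `(v, pol)` true iff `σ v = pol`. -/
theorem no_2cnf_for_disjunction_of_three :
    ¬ ∃ (Y : Type) (_ : Fintype Y) (ψ : List (List ((Fin 3 ⊕ Y) × Bool))),
      (∀ c ∈ ψ, c.length ≤ 2) ∧
      (∀ α : Fin 3 → Bool,
        (α 0 || α 1 || α 2) = true ↔
          ∃ β : Y → Bool, ∀ c ∈ ψ, ∃ l ∈ c, Sum.elim α β l.1 = l.2) := by
  rintro ⟨Y, _, ψ, hψ, h⟩
  obtain ⟨β₁, h₁⟩ := (h ![true, false, false]).1 rfl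
  obtain ⟨β₂, h₂⟩ := (h ![false, true, false]).1 rfl
  obtain ⟨β₃, h₃⟩ := (h ![false, false, true]).1 rfl
  have h₀ := (h ![false, false, false]).2 ⟨fun y => maj (β₁ y) (β₂ y) (β₃ y), fun c hc => by
    obtain ⟨⟨v, p⟩, hl, e⟩ :=
      exists_literal_maj _ _ _ c (hψ c hc) (h₁ c hc) (h₂ c hc) (h₃ c hc)
    refine ⟨(v, p), hl, Eq.trans ?_ e⟩
    rcases v with i | y
    · fin_cases i <;> rfl
    · rfl⟩
  exact Bool.false_ne_true h₀
end

section
/- Let S be a symmetric marriage problem instance. Then S is solvable if and only if the graph G*(S) contains a matching consisting of exactly |G_L| + |B_L| edges. -/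
/-!
Given a solution, join each listed person to the partner, or to the partner's list-vertex when the
partner is listed too; this yields one edge per listed person, and these edges are disjoint.

Conversely, every edge of `G*(S)` contains a listed person, so a matching with `|G_L| + |B_L|`
edges covers all of them (`exists_edge_of_listed`). Identifying each list-vertex with its owner, the
edges at listed girls form a matching between `G` and `B` that covers `G_L`, the edges at listed
boys form one that covers `B_L`, and all these pairs respect the lists. The two matchings are merged
into one covering `G_L` and `B_L` simultaneously by a Cantor–Bernstein argument
(`exists_common_matching`).
-/

attribute [local instance] Classical.propDecidable

/-- The vertex type of the graph `G*(S)`: actual girls and boys (`Sum.inl`) together with the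
list-vertices `L_g` and `L_b` (`Sum.inr`). -/
abbrev SMPVertex (G B : Type) := (G ⊕ B) ⊕ (G ⊕ B)

def vGirl {G B : Type} (g : G) : SMPVertex G B := Sum.inl (Sum.inl g)
def vBoy {G B : Type} (b : B) : SMPVertex G B := Sum.inl (Sum.inr b)
def vLGirl {G B : Type} (g : G) : SMPVertex G B := Sum.inr (Sum.inl g)
def vLBoy {G B : Type} (b : B) : SMPVertex G B := Sum.inr (Sum.inr b)

/-- The edges of the graph `G*(S)` (each edge listed in one orientation):
`{g, b}` when `g ∈ G_L`, `b ∈ 𝒯_g`, `b ∉ B_L`, or `b ∈ B_L`, `g ∈ 𝒯_b`, `g ∉ G_L`;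
`{g, L_b}` and `{L_g, b}` when `g ∈ G_L` and `b ∈ B_L` are list-compatible. -/
def smpRel {G B : Type} (GLs : Finset G) (BLs : Finset B)
    (TG : G → Finset B) (TB : B → Finset G) :
    SMPVertex G B → SMPVertex G B → Prop := fun u v =>
  (∃ g b, u = vGirl g ∧ v = vBoy b ∧
      ((g ∈ GLs ∧ b ∈ TG g ∧ b ∉ BLs) ∨ (b ∈ BLs ∧ g ∈ TB b ∧ g ∉ GLs))) ∨
  (∃ g b, u = vGirl g ∧ v = vLBoy b ∧ g ∈ GLs ∧ b ∈ BLs ∧ b ∈ TG g ∧ g ∈ TB b) ∨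
  (∃ g b, u = vLGirl g ∧ v = vBoy b ∧ g ∈ GLs ∧ b ∈ BLs ∧ b ∈ TG g ∧ g ∈ TB b)

/-- A matching for an (oriented) edge relation `E`: a set of unordered pairs, each of which is
an edge, no two of which share a vertex. -/
def IsMatching {G B : Type} (E : SMPVertex G B → SMPVertex G B → Prop)
    (M : Set (Sym2 (SMPVertex G B))) : Prop :=
  (∀ e ∈ M, ∃ u v, e = s(u, v) ∧ E u v) ∧
  (∀ e ∈ M, ∀ f ∈ M, e ≠ f → ∀ x, x ∈ e → x ∉ f)

/-- Solvability of a symmetric marriage problem instance. -/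
def SMPSolvable {G B : Type} (GLs : Finset G) (BLs : Finset B)
    (TG : G → Finset B) (TB : B → Finset G) : Prop :=
  ∃ P : Set (G × B),
    (∀ g b b', (g, b) ∈ P → (g, b') ∈ P → b = b') ∧
    (∀ g g' b, (g, b) ∈ P → (g', b) ∈ P → g = g') ∧
    (∀ g ∈ GLs, ∃ b, (g, b) ∈ P) ∧
    (∀ b ∈ BLs, ∃ g, (g, b) ∈ P) ∧
    (∀ g b, (g, b) ∈ P → (g ∈ GLs → b ∈ TG g) ∧ (b ∈ BLs → g ∈ TB b))

/-- The real (non-list) vertex of `G*(S)` belonging to a person who owns a list. -/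
def listedVertex {G B : Type} {GLs : Finset G} {BLs : Finset B} :
    GLs ⊕ BLs → SMPVertex G B
  | Sum.inl g => vGirl g.1
  | Sum.inr b => vBoy b.1

/-- Every edge of `G*(S)` contains a listed person, so distinct edges of a matching can be charged
to distinct listed persons; if there are as many edges as listed persons, all are covered. -/
lemma exists_edge_of_listed {G B : Type} [Fintype G] [Fintype B]
    {GLs : Finset G} {BLs : Finset B} {TG : G → Finset B} {TB : B → Finset G}
    {M : Set (Sym2 (SMPVertex G B))} (hM : IsMatching (smpRel GLs BLs TG TB) M)
    (hcard : M.ncard = GLs.card + BLs.card) (i : GLs ⊕ BLs) :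
    ∃ e ∈ M, listedVertex i ∈ e := by
  have hex : ∀ e : M, ∃ i : GLs ⊕ BLs, listedVertex i ∈ e.1 := by
    rintro ⟨e, he⟩
    obtain ⟨u, v, rfl, h⟩ := hM.1 e he
    rcases h with ⟨g, b, rfl, rfl, ⟨hg, -⟩ | ⟨hb, -⟩⟩ | ⟨g, b, rfl, rfl, hg, -⟩ |
      ⟨g, b, rfl, rfl, -, hb, -⟩
    · exact ⟨Sum.inl ⟨g, hg⟩, by simp [listedVertex]⟩
    · exact ⟨Sum.inr ⟨b, hb⟩, by simp [listedVertex]⟩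
    · exact ⟨Sum.inl ⟨g, hg⟩, by simp [listedVertex]⟩
    · exact ⟨Sum.inr ⟨b, hb⟩, by simp [listedVertex]⟩
  choose f hf using hex
  have hinj : Function.Injective f := by
    intro e e' h
    by_contra hne
    exact hM.2 e.1 e.2 e'.1 e'.2 (fun h' => hne (Subtype.ext h')) _ (hf e) (h ▸ hf e')
  have hle : Nat.card (GLs ⊕ BLs) ≤ Nat.card M := by
    rw [Nat.card_coe_set_eq, hcard]
    simp
  obtain ⟨e, rfl⟩ := (hinj.bijective_of_nat_card_le hle).2 i
  exact ⟨e.1, e.2, hf e⟩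

/-- The Mendelsohn–Dulmage theorem for bipartite relations: a matching `A` covering `GLs` and a
matching `C` covering `BLs` can be merged into one matching inside `A ∪ C` covering both.
As in the Cantor–Bernstein theorem, the girls who keep their `A`-partner form a fixed point, given
by Knaster–Tarski, of a monotone map on sets. -/
lemma exists_common_matching {G B : Type} (GLs : Finset G) (BLs : Finset B)
    (A C : G → B → Prop)
    (hA₁ : ∀ g b b', A g b → A g b' → b = b') (hA₂ : ∀ g g' b, A g b → A g' b → g = g')
    (hC₁ : ∀ g b b', C g b → C g b' → b = b') (hC₂ : ∀ g g' b, C g b → C g' b → g = g')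
    (hA : ∀ g ∈ GLs, ∃ b, A g b) (hC : ∀ b ∈ BLs, ∃ g, C g b) :
    ∃ P : Set (G × B),
      (∀ g b b', (g, b) ∈ P → (g, b') ∈ P → b = b') ∧
      (∀ g g' b, (g, b) ∈ P → (g', b) ∈ P → g = g') ∧
      (∀ g ∈ GLs, ∃ b, (g, b) ∈ P) ∧
      (∀ b ∈ BLs, ∃ g, (g, b) ∈ P) ∧
      (∀ g b, (g, b) ∈ P → A g b ∨ C g b) := by
  let F : Set G →o Set G :=
    { toFun := fun X => {g | g ∈ GLs ∧ ¬ ∃ b ∈ BLs, (¬ ∃ g' ∈ X, A g' b) ∧ C g b}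
      monotone' := by
        rintro X Y hXY g ⟨hg, h⟩
        refine ⟨hg, fun ⟨b, hb, hY, hc⟩ => h ⟨b, hb, ?_, hc⟩⟩
        rintro ⟨g', hg', ha⟩
        exact hY ⟨g', hXY hg', ha⟩ }
  obtain ⟨X, hX⟩ : ∃ X : Set G,
      ∀ g, g ∈ X ↔ g ∈ GLs ∧ ¬ ∃ b ∈ BLs, (¬ ∃ g' ∈ X, A g' b) ∧ C g b :=
    ⟨F.lfp, fun g => (Set.ext_iff.1 F.map_lfp g).symm⟩
  refine ⟨{p | (p.1 ∈ X ∧ A p.1 p.2) ∨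
    (p.2 ∈ BLs ∧ (¬ ∃ g' ∈ X, A g' p.2) ∧ C p.1 p.2)}, ?_, ?_, ?_, ?_, ?_⟩
  · rintro g b b' (⟨h, ha⟩ | ⟨h, hn, hc⟩) (⟨h', ha'⟩ | ⟨h', hn', hc'⟩)
    · exact hA₁ g b b' ha ha'
    · exact absurd ⟨b', h', hn', hc'⟩ ((hX g).1 h).2
    · exact absurd ⟨b, h, hn, hc⟩ ((hX g).1 h').2
    · exact hC₁ g b b' hc hc'
  · rintro g g' b (⟨h, ha⟩ | ⟨h, hn, hc⟩) (⟨h', ha'⟩ | ⟨h', hn', hc'⟩)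
    · exact hA₂ g g' b ha ha'
    · exact absurd ⟨g, h, ha⟩ hn'
    · exact absurd ⟨g', h', ha'⟩ hn
    · exact hC₂ g g' b hc hc'
  · intro g hg
    by_cases h : g ∈ X
    · obtain ⟨b, hb⟩ := hA g hg
      exact ⟨b, Or.inl ⟨h, hb⟩⟩
    · have : ∃ b ∈ BLs, (¬ ∃ g' ∈ X, A g' b) ∧ C g b := by
        by_contra hn
        exact h ((hX g).2 ⟨hg, hn⟩)
      obtain ⟨b, hb⟩ := this
      exact ⟨b, Or.inr hb⟩
  · intro b hb
    by_cases h : ∃ g' ∈ X, A g' b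
    · obtain ⟨g, hg⟩ := h
      exact ⟨g, Or.inl hg⟩
    · obtain ⟨g, hg⟩ := hC b hb
      exact ⟨g, Or.inr ⟨hb, h, hg⟩⟩
  · rintro g b (⟨-, h⟩ | ⟨-, -, h⟩)
    · exact Or.inl h
    · exact Or.inr h

lemma exists_matching_of_solvable {G B : Type} [Fintype G] [Fintype B]
    (GLs : Finset G) (BLs : Finset B) (TG : G → Finset B) (TB : B → Finset G)
    (h : SMPSolvable GLs BLs TG TB) :
    ∃ M : Set (Sym2 (SMPVertex G B)),
      IsMatching (smpRel GLs BLs TG TB) M ∧ M.ncard = GLs.card + BLs.card := by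
  obtain ⟨P, h₁, h₂, hG, hB, hP⟩ := h
  choose φ hφ using hG
  choose ψ hψ using hB
  -- A listed person is joined to the partner, or to the partner's list if the partner is listed.
  let other : GLs ⊕ BLs → SMPVertex G B
    | Sum.inl g => if φ g.1 g.2 ∈ BLs then vLBoy (φ g.1 g.2) else vBoy (φ g.1 g.2)
    | Sum.inr b => if ψ b.1 b.2 ∈ GLs then vLGirl (ψ b.1 b.2) else vGirl (ψ b.1 b.2)
  let edge : GLs ⊕ BLs → Sym2 (SMPVertex G B) := fun i => s(listedVertex i, other i)
  have hdisj : ∀ i j x, x ∈ edge i → x ∈ edge j → i = j := by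
    intro i j x hi hj
    simp only [edge, Sym2.mem_iff] at hi hj
    rcases i with ⟨g, hg⟩ | ⟨b, hb⟩ <;> rcases j with ⟨g', hg'⟩ | ⟨b', hb'⟩ <;>
      simp only [listedVertex, other, vGirl, vBoy, vLGirl, vLBoy] at hi hj <;> grind
  have hinj : Function.Injective edge := fun i j hij =>
    hdisj i j (listedVertex i) (by simp [edge]) (by rw [← hij]; simp [edge])
  refine ⟨Set.range edge, ⟨?_, ?_⟩, ?_⟩
  · rintro _ ⟨⟨g, hg⟩ | ⟨b, hb⟩, rfl⟩
    · refine ⟨_, _, rfl, ?_⟩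
      have := hP _ _ (hφ g hg)
      by_cases hb : φ g hg ∈ BLs
      · exact Or.inr (Or.inl ⟨g, φ g hg, rfl, if_pos hb, hg, hb, this.1 hg, this.2 hb⟩)
      · exact Or.inl ⟨g, φ g hg, rfl, if_neg hb, Or.inl ⟨hg, this.1 hg, hb⟩⟩
    · have := hP _ _ (hψ b hb)
      refine ⟨_, _, Sym2.eq_swap, ?_⟩
      by_cases hg : ψ b hb ∈ GLs
      · exact Or.inr (Or.inr ⟨ψ b hb, b, if_pos hg, rfl, hg, hb, this.1 hg, this.2 hb⟩)
      · exact Or.inl ⟨ψ b hb, b, if_neg hg, rfl, Or.inr ⟨hb, this.2 hb, hg⟩⟩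
  · rintro _ ⟨i, rfl⟩ _ ⟨j, rfl⟩ hne x hi hj
    exact hne (congrArg edge (hdisj i j x hi hj))
  · rw [Set.ncard_range_of_injective hinj]
    simp

lemma solvable_of_exists_matching {G B : Type} [Fintype G] [Fintype B]
    (GLs : Finset G) (BLs : Finset B) (TG : G → Finset B) (TB : B → Finset G)
    (M : Set (Sym2 (SMPVertex G B))) (hM : IsMatching (smpRel GLs BLs TG TB) M)
    (hcard : M.ncard = GLs.card + BLs.card) : SMPSolvable GLs BLs TG TB := by
  have hcov := exists_edge_of_listed hM hcard
  have huniq : ∀ x y z : SMPVertex G B, s(x, y) ∈ M → s(x, z) ∈ M → y = z := by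
    intro x y z hy hz
    by_contra hne
    exact hM.2 _ hy _ hz (fun h => hne (Sym2.congr_right.1 h)) x (by simp) (by simp)
  have huniq' : ∀ x y z : SMPVertex G B, s(y, x) ∈ M → s(z, x) ∈ M → y = z := by
    intro x y z hy hz
    exact huniq x y z (by rwa [Sym2.eq_swap]) (by rwa [Sym2.eq_swap])
  -- `A` and `C` forget whether an edge ends at a person or at that person's list. Membership in
  -- the lists makes the two kinds of edges at a given name mutually exclusive.
  let A : G → B → Prop := fun g b => g ∈ GLs ∧ b ∈ TG g ∧
    ((b ∉ BLs ∧ s(vGirl g, vBoy b) ∈ M) ∨ (b ∈ BLs ∧ g ∈ TB b ∧ s(vGirl g, vLBoy b) ∈ M))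
  let C : G → B → Prop := fun g b => b ∈ BLs ∧ g ∈ TB b ∧
    ((g ∉ GLs ∧ s(vGirl g, vBoy b) ∈ M) ∨ (g ∈ GLs ∧ b ∈ TG g ∧ s(vLGirl g, vBoy b) ∈ M))
  have hA : ∀ g ∈ GLs, ∃ b, A g b := by
    intro g hg
    obtain ⟨e, he, hge⟩ := hcov (Sum.inl ⟨g, hg⟩)
    obtain ⟨u, v, rfl, h⟩ := hM.1 e he
    simp only [listedVertex, Sym2.mem_iff] at hge
    rcases h with ⟨g', b, rfl, rfl, h⟩ | ⟨g', b, rfl, rfl, h⟩ | ⟨g', b, rfl, rfl, h⟩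
    · obtain rfl : g = g' := by simpa [vGirl, vBoy] using hge
      exact ⟨b, by grind⟩
    · obtain rfl : g = g' := by simpa [vGirl, vLBoy] using hge
      exact ⟨b, by grind⟩
    · simp [vGirl, vBoy, vLGirl] at hge
  have hC : ∀ b ∈ BLs, ∃ g, C g b := by
    intro b hb
    obtain ⟨e, he, hbe⟩ := hcov (Sum.inr ⟨b, hb⟩)
    obtain ⟨u, v, rfl, h⟩ := hM.1 e he
    simp only [listedVertex, Sym2.mem_iff] at hbe
    rcases h with ⟨g, b', rfl, rfl, h⟩ | ⟨g, b', rfl, rfl, h⟩ | ⟨g, b', rfl, rfl, h⟩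
    · obtain rfl : b = b' := by simpa [vGirl, vBoy] using hbe
      exact ⟨g, by grind⟩
    · simp [vGirl, vBoy, vLBoy] at hbe
    · obtain rfl : b = b' := by simpa [vLGirl, vBoy] using hbe
      exact ⟨g, by grind⟩
  obtain ⟨P, h₁, h₂, hG, hB, hP⟩ := exists_common_matching GLs BLs A C
    (by
      rintro g b b' ⟨-, -, ⟨-, h⟩ | ⟨-, -, h⟩⟩ ⟨-, -, ⟨-, h'⟩ | ⟨-, -, h'⟩⟩ <;>
        simpa [vBoy, vLBoy] using huniq _ _ _ h h')
    (by
      rintro g g' b ⟨-, -, ⟨hb, h⟩ | ⟨hb, -, h⟩⟩ ⟨-, -, ⟨hb', h'⟩ | ⟨hb', -, h'⟩⟩ <;>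
        first
        | contradiction
        | simpa [vGirl] using huniq' _ _ _ h h')
    (by
      rintro g b b' ⟨-, -, ⟨hg, h⟩ | ⟨hg, -, h⟩⟩ ⟨-, -, ⟨hg', h'⟩ | ⟨hg', -, h'⟩⟩ <;>
        first
        | contradiction
        | simpa [vBoy] using huniq _ _ _ h h')
    (by
      rintro g g' b ⟨-, -, ⟨-, h⟩ | ⟨-, -, h⟩⟩ ⟨-, -, ⟨-, h'⟩ | ⟨-, -, h'⟩⟩ <;>
        simpa [vGirl, vLGirl] using huniq' _ _ _ h h')
    hA hC
  exact ⟨P, h₁, h₂, hG, hB, fun g b hgb => by grind⟩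

/-- A symmetric marriage problem instance is solvable iff the graph `G*(S)` contains a matching
with exactly `|G_L| + |B_L|` edges. -/
theorem smp_solvable_iff_matching {G B : Type} [Fintype G] [Fintype B]
    (GLs : Finset G) (BLs : Finset B) (TG : G → Finset B) (TB : B → Finset G) :
    SMPSolvable GLs BLs TG TB ↔
      ∃ M : Set (Sym2 (SMPVertex G B)),
        IsMatching (smpRel GLs BLs TG TB) M ∧ M.ncard = GLs.card + BLs.card := by
  exact ⟨exists_matching_of_solvable GLs BLs TG TB,
    fun ⟨M, hM, hcard⟩ => solvable_of_exists_matching GLs BLs TG TB M hM hcard⟩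
end

section
/- Let S be a symmetric marriage problem instance. For g ∈ G_L define the pared list 𝒯*_g = {b ∈ 𝒯_g : b ∉ B_L, or (g ∈ 𝒯_b)}, and for b ∈ B_L define 𝒯*_b = {g ∈ 𝒯_b : g ∉ G_L, or (b ∈ 𝒯_g)}. Then S is solvable if and only if both of the following hold: there exists an injective function T_G : G_L → B with T_G g ∈ 𝒯*_g for every g ∈ G_L, and there exists an injective function T_B : B_L → G with T_B b ∈ 𝒯*_b for every b ∈ B_L. -/
/-!
A solution restricts to an injection on each side, and its pairs respect the pared lists.

Conversely, given `T : G_L → B` and `T' : B_L → G`, every pair `(g, T g)` and every pair `(T' b, b)`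
is admissible, because the pared lists take both sides' demands into account. It remains to
select a matching among these pairs that covers both `G_L` and `B_L`, which is done as in the
Schröder–Bernstein theorem: the monotone operator `s ↦ G_L \ T' (B_L \ T s)` has a fixed point `s`
(`exists_fixed_set`). Marry each `g ∈ s` to `T g`, and each `b ∈ B_L \ T s` to `T' b`. The fixed
point equation says precisely that these two families are disjoint and that an element of `G_L`
outside `s` is covered by the second one.
-/

attribute [local instance] Classical.propDecidable

/-- A fixed point of `s ↦ G_L \ T' (B_L \ T s)`, with `G_L` and `B_L` given by the predicates
`p` and `q`. -/
lemma exists_fixed_set {G B : Type} {p : G → Prop} {q : B → Prop}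
    (T : {g // p g} → B) (T' : {b // q b} → G) :
    ∃ s : Set {g // p g}, ∀ g, g ∈ s ↔ ∀ b, T' b = g.1 → ∃ g' ∈ s, T g' = b.1 := by
  let F : Set {g // p g} →o Set {g // p g} :=
    { toFun := fun s => {g | ∀ b, T' b = g.1 → ∃ g' ∈ s, T g' = b.1}
      monotone' := fun s t hst g hg b hb => by
        obtain ⟨g', hg', h⟩ := hg b hb
        exact ⟨g', hst hg', h⟩ }
  exact ⟨F.lfp, fun g => (Set.ext_iff.1 F.map_lfp g).symm⟩

/-- A symmetric marriage problem instance is solvable iff the two classical marriage problems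
obtained from the pared-down lists `𝒯*_g = {b ∈ 𝒯_g : b ∉ B_L ∨ g ∈ 𝒯_b}` and
`𝒯*_b = {g ∈ 𝒯_b : g ∉ G_L ∨ b ∈ 𝒯_g}` are both solvable. -/
theorem smp_solvable_iff_two_cmps {G B : Type} [Fintype G] [Fintype B]
    (GLs : Finset G) (BLs : Finset B) (TG : G → Finset B) (TB : B → Finset G) :
    SMPSolvable GLs BLs TG TB ↔
      ((∃ T : {g // g ∈ GLs} → B, Function.Injective T ∧
          ∀ g : {g // g ∈ GLs}, T g ∈ (TG g.1).filter (fun b => b ∉ BLs ∨ g.1 ∈ TB b)) ∧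
       (∃ T' : {b // b ∈ BLs} → G, Function.Injective T' ∧
          ∀ b : {b // b ∈ BLs}, T' b ∈ (TB b.1).filter (fun g => g ∉ GLs ∨ b.1 ∈ TG g))) := by
  constructor
  · rintro ⟨P, hr, hl, hG, hB, hP⟩
    constructor
    · choose T hT using fun g : {g // g ∈ GLs} => hG g.1 g.2
      refine ⟨T, fun g g' h => Subtype.ext (hl _ _ _ (hT g) (h ▸ hT g')), fun g => ?_⟩
      obtain ⟨h₁, h₂⟩ := hP _ _ (hT g)
      exact Finset.mem_filter.2 ⟨h₁ g.2, (em (T g ∈ BLs)).symm.imp_right h₂⟩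
    · choose T' hT' using fun b : {b // b ∈ BLs} => hB b.1 b.2
      refine ⟨T', fun b b' h => Subtype.ext (hr _ _ _ (hT' b) (h ▸ hT' b')), fun b => ?_⟩
      obtain ⟨h₁, h₂⟩ := hP _ _ (hT' b)
      exact Finset.mem_filter.2 ⟨h₂ b.2, (em (T' b ∈ GLs)).symm.imp_right h₁⟩
  · rintro ⟨⟨T, hTi, hT⟩, ⟨T', hTi', hT'⟩⟩
    obtain ⟨s, hs⟩ := exists_fixed_set T T'
    refine ⟨{x | (∃ g ∈ s, g.1 = x.1 ∧ T g = x.2) ∨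
      ∃ b : {b // b ∈ BLs}, (¬ ∃ g ∈ s, T g = b.1) ∧ T' b = x.1 ∧ b.1 = x.2},
      ?_, ?_, ?_, ?_, ?_⟩
    · rintro g b b' (⟨g₁, h₁, rfl, rfl⟩ | ⟨b₁, h₁, rfl, rfl⟩) (⟨g₂, h₂, e, rfl⟩ | ⟨b₂, h₂, e, rfl⟩)
      · rw [Subtype.ext e]
      · exact (h₂ ((hs g₁).1 h₁ b₂ e)).elim
      · exact (h₁ ((hs g₂).1 h₂ b₁ e.symm)).elim
      · rw [hTi' e]
    · rintro g g' b (⟨g₁, h₁, rfl, rfl⟩ | ⟨b₁, h₁, rfl, rfl⟩) (⟨g₂, h₂, rfl, e⟩ | ⟨b₂, h₂, rfl, e⟩)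
      · rw [hTi e]
      · exact (h₂ ⟨g₁, h₁, e.symm⟩).elim
      · exact (h₁ ⟨g₂, h₂, e⟩).elim
      · rw [Subtype.ext e]
    · intro g hg
      by_cases h : (⟨g, hg⟩ : {g // g ∈ GLs}) ∈ s
      · exact ⟨_, Or.inl ⟨_, h, rfl, rfl⟩⟩
      · rw [hs] at h
        push Not at h
        obtain ⟨b, hb, hn⟩ := h
        exact ⟨b.1, Or.inr ⟨b, fun ⟨g', h₁, h₂⟩ => hn g' h₁ h₂, hb, rfl⟩⟩
    · intro b hb
      by_cases h : ∃ g ∈ s, T g = b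
      · obtain ⟨g, hg, e⟩ := h
        exact ⟨g.1, Or.inl ⟨g, hg, rfl, e⟩⟩
      · exact ⟨_, Or.inr ⟨⟨b, hb⟩, h, rfl, rfl⟩⟩
    · rintro g b (⟨g₁, -, rfl, rfl⟩ | ⟨b₁, -, rfl, rfl⟩)
      · obtain ⟨h₁, h₂⟩ := Finset.mem_filter.1 (hT g₁)
        exact ⟨fun _ => h₁, fun h => h₂.resolve_left (not_not_intro h)⟩
      · obtain ⟨h₁, h₂⟩ := Finset.mem_filter.1 (hT' b₁)
        exact ⟨fun h => h₂.resolve_left (not_not_intro h), fun _ => h₁⟩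
end

section
/- Let G, X, Y be finite sets and for each g ∈ G let T_g be a nonempty subset of X × Y. Form the fractional marriage problem instance whose girls are the disjoint union of G, a copy of X, and a copy of Y, whose boys are the disjoint union of X, Y, and a set Z containing a fresh element z_x for each x ∈ X and a fresh element z_y for each y ∈ Y, and whose tradeoff sets are: 𝒯_g = { (1/2)·δ_x + (1/2)·δ_y : (x, y) ∈ T_g } for each g ∈ G; 𝒯 of the girl copying x ∈ X is the singleton { (1/2)·δ_x + (1/2)·δ_{z_x} }; and 𝒯 of the girl copying y ∈ Y is the singleton { (1/2)·δ_y + (1/2)·δ_{z_y} }. Then this FMP instance is solvable if and only if there exists a function f : G → X × Y such that f g ∈ T_g for every g ∈ G, the first components of f are pairwise distinct, and the second components of f are pairwise distinct. -/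
/-!
The girl copying `x` always spends `1/2` of the boy `x`, so the girls of `G` have exactly `1/2` of
that boy left; as each of them takes either `1/2` or nothing, the constraint at `x` says that at
most one of them picks `x`. Over all `x` this is injectivity of the first components
(`sum_half_le_iff_injective`), and likewise for `Y`. The constraints at the fresh boys hold
trivially, since each of them is only used, with weight `1/2`, by one girl.
-/

attribute [local instance] Classical.propDecidable

/-- Half-weights leave at most `1/2` on every point exactly when no point is hit twice. -/
theorem sum_half_le_iff_injective {G X : Type} [Fintype G] (p : G → X) :
    (∀ x, ∑ g, (if x = p g then (1 / 2 : ℚ) else 0) + 1 / 2 ≤ 1) ↔ Function.Injective p := by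
  have key : ∀ x, ∑ g, (if x = p g then (1 / 2 : ℚ) else 0)
      = ((Finset.univ.filter fun g => x = p g).card : ℚ) * (1 / 2) := by
    intro x
    rw [← Finset.sum_filter, Finset.sum_const, nsmul_eq_mul]
  constructor
  · intro h a b hab
    have h1 := h (p a)
    rw [key] at h1
    have h2 : ((Finset.univ.filter fun g => p a = p g).card : ℚ) ≤ 1 := by linarith
    exact Finset.card_le_one.mp (by exact_mod_cast h2) a (by simp) b (by simpa using hab)
  · intro h x
    have h1 : (Finset.univ.filter fun g => x = p g).card ≤ 1 := by
      refine Finset.card_le_one.mpr fun a ha b hb => h ?_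
      simp only [Finset.mem_filter, Finset.mem_univ, true_and] at ha hb
      rw [← ha, ← hb]
    have h2 : ((Finset.univ.filter fun g => x = p g).card : ℚ) ≤ 1 := by exact_mod_cast h1
    rw [key]
    linarith

/-- The half-integral FMP encoding of tripartite matching: the girls are `G ⊕ X ⊕ Y`, the boys
are `X ⊕ Y ⊕ Z` with `Z = X ⊕ Y` the fresh elements; each `g ∈ G` has the tradeoffs
`(1/2)·δ_x + (1/2)·δ_y` for `(x, y) ∈ T_g`, the girl copying `x ∈ X` has the single tradeoff
`(1/2)·δ_x + (1/2)·δ_{z_x}`, and the girl copying `y ∈ Y` has the single tradeoff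
`(1/2)·δ_y + (1/2)·δ_{z_y}`. This FMP instance is solvable iff there is a perfect tripartite
matching: a choice `f g ∈ T_g` with pairwise distinct first components and pairwise distinct
second components. -/
theorem half_integral_fmp_iff_tripartite_matching {G X Y : Type}
    [Fintype G] [Fintype X] [Fintype Y]
    (T : G → Finset (X × Y)) (hne : ∀ g, (T g).Nonempty) :
    Solvable (G := G ⊕ X ⊕ Y) (B := X ⊕ Y ⊕ (X ⊕ Y))
      (Sum.elim
        (fun g => (T g).image (fun xy =>
          (1 / 2 : ℚ) • delta (Sum.inl xy.1) +
          (1 / 2 : ℚ) • delta (Sum.inr (Sum.inl xy.2))))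
        (Sum.elim
          (fun x => {(1 / 2 : ℚ) • delta (Sum.inl x) +
            (1 / 2 : ℚ) • delta (Sum.inr (Sum.inr (Sum.inl x)))})
          (fun y => {(1 / 2 : ℚ) • delta (Sum.inr (Sum.inl y)) +
            (1 / 2 : ℚ) • delta (Sum.inr (Sum.inr (Sum.inr y)))})))
      ↔ ∃ f : G → X × Y, (∀ g, f g ∈ T g) ∧
          Function.Injective (fun g => (f g).1) ∧ Function.Injective (fun g => (f g).2) := by
  constructor
  · rintro ⟨F, hF, hsum⟩
    have hG : ∀ g, ∃ xy ∈ T g, (1 / 2 : ℚ) • delta (Sum.inl xy.1) +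
        (1 / 2 : ℚ) • delta (Sum.inr (Sum.inl xy.2)) = F (Sum.inl g) := fun g => by
      simpa only [Sum.elim_inl, Finset.mem_image] using hF (Sum.inl g)
    have hX := fun x => Finset.mem_singleton.mp (hF (Sum.inr (Sum.inl x)))
    have hY := fun y => Finset.mem_singleton.mp (hF (Sum.inr (Sum.inr y)))
    choose p hp hpF using hG
    refine ⟨p, hp, (sum_half_le_iff_injective _).mp fun x => ?_,
      (sum_half_le_iff_injective _).mp fun y => ?_⟩
    · have h := hsum (Sum.inl x)
      simpa [Fintype.sum_sum_type, ← hpF, hX, hY, delta] using h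
    · have h := hsum (Sum.inr (Sum.inl y))
      simpa [Fintype.sum_sum_type, ← hpF, hX, hY, delta] using h
  · rintro ⟨p, hp, h1, h2⟩
    refine ⟨Sum.elim
      (fun g => (1 / 2 : ℚ) • delta (Sum.inl (p g).1) +
        (1 / 2 : ℚ) • delta (Sum.inr (Sum.inl (p g).2)))
      (Sum.elim
        (fun x => (1 / 2 : ℚ) • delta (Sum.inl x) +
          (1 / 2 : ℚ) • delta (Sum.inr (Sum.inr (Sum.inl x))))
        (fun y => (1 / 2 : ℚ) • delta (Sum.inr (Sum.inl y)) +
          (1 / 2 : ℚ) • delta (Sum.inr (Sum.inr (Sum.inr y))))), ?_, ?_⟩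
    · rintro (g | x | y)
      · exact Finset.mem_image_of_mem _ (hp g)
      · exact Finset.mem_singleton_self _
      · exact Finset.mem_singleton_self _
    · rintro (x | y | x | y)
      · simpa [Fintype.sum_sum_type, delta] using (sum_half_le_iff_injective _).mpr h1 x
      · simpa [Fintype.sum_sum_type, delta] using (sum_half_le_iff_injective _).mpr h2 y
      all_goals
        simp [Fintype.sum_sum_type, delta]
        norm_num
end

section
/- Let (G, B, {𝒯_g}) be a fractional marriage problem instance, let e₁ ≠ e₂ be elements of B, and let g₀ ∈ G with 𝒯_{g₀} = {δ_{e₁}, δ_{e₂}}. Suppose that every tradeoff of the instance other than the two members of 𝒯_{g₀} that has a nonzero coefficient on e₁ or on e₂ is equal to δ_{e₁} or to δ_{e₂}. Then the instance is solvable if and only if the instance obtained by deleting the girl g₀ together with her tradeoff set and replacing, in every remaining tradeoff set, each occurrence of the tradeoff δ_{e₂} by δ_{e₁} is solvable. -/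
/-!
Write `r` for the map replacing `δ_{e₂}` by `δ_{e₁}`. On every tradeoff of the instance, `r` moves
the whole load of `e₂` to `e₁` and leaves all other loads alone (`merge_fst`, `merge_snd`,
`merge_other`). The girl `g₀` always loads `e₁` and `e₂` by exactly one unit in total. So a solution
of the original instance puts at most `2 - 1 = 1` unit on `e₁` and `e₂` from the other girls, which
is the constraint at `e₁` in the reduced instance. Conversely, lift a solution of the reduced
instance along `r`. The lifted tradeoffs load `e₁` and `e₂` by at most one unit in total, and
integrally: either one of them is `δ_{e₁}`, so that `e₂` is unloaded and `g₀` can take `δ_{e₂}`, or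
`e₁` is unloaded and `g₀` can take `δ_{e₁}`.
-/

attribute [local instance] Classical.propDecidable

section merge

variable {B : Type} {e₁ e₂ : B} {t : B → ℚ} {_ : Decidable (t = delta e₂)}

lemma merge_fst (hee : e₁ ≠ e₂) (ht : (t e₁ ≠ 0 ∨ t e₂ ≠ 0) → t = delta e₁ ∨ t = delta e₂) :
    (if t = delta e₂ then delta e₁ else t) e₁ = t e₁ + t e₂ := by
  split_ifs with h
  · subst h
    simp [delta, hee]
  · by_cases h2 : t e₂ = 0
    · simp [h2]
    · rcases ht (Or.inr h2) with h3 | h3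
      · subst h3
        simp [delta, hee.symm]
      · exact absurd h3 h

lemma merge_snd (hee : e₁ ≠ e₂) (ht : (t e₁ ≠ 0 ∨ t e₂ ≠ 0) → t = delta e₁ ∨ t = delta e₂) :
    (if t = delta e₂ then delta e₁ else t) e₂ = 0 := by
  split_ifs with h
  · simp [delta, hee.symm]
  · by_contra h2
    rcases ht (Or.inr h2) with h3 | h3
    · subst h3
      simp [delta, hee.symm] at h2
    · exact h h3

lemma merge_other {b : B} (h1 : b ≠ e₁) (h2 : b ≠ e₂) :
    (if t = delta e₂ then delta e₁ else t) b = t b := by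
  split_ifs with h
  · subst h
    simp [delta, h1, h2]
  · rfl

end merge

/-- Rule R4: if a girl `g₀` has the tradeoff set `{δ_{e₁}, δ_{e₂}}` and elsewhere `e₁` and `e₂`
appear solely in the integral tradeoffs `δ_{e₁}` and `δ_{e₂}`, then `g₀` may be removed and
every occurrence of `δ_{e₂}` replaced by `δ_{e₁}` without affecting solvability. -/
theorem integral_pair_elimination {G B : Type} [Fintype G] [Fintype B]
    (𝒯 : G → Finset (B → ℚ))
    (hne : ∀ g, (𝒯 g).Nonempty)
    (htr : ∀ g, ∀ t ∈ 𝒯 g, IsTradeoff t)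
    (e₁ e₂ : B) (hee : e₁ ≠ e₂) (g₀ : G)
    (hT₀ : 𝒯 g₀ = {delta e₁, delta e₂})
    (hother : ∀ g, ∀ t ∈ 𝒯 g, (t e₁ ≠ 0 ∨ t e₂ ≠ 0) → t = delta e₁ ∨ t = delta e₂) :
    Solvable 𝒯 ↔
      Solvable (G := {g : G // g ≠ g₀})
        (fun g => (𝒯 g.1).image (fun t => if t = delta e₂ then delta e₁ else t)) := by
  constructor
  · rintro ⟨f, hf, hsum⟩
    refine ⟨fun g => if f g.1 = delta e₂ then delta e₁ else f g.1,
      fun g => Finset.mem_image_of_mem _ (hf g.1), fun b => ?_⟩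
    have hsplit : ∀ b, f g₀ b + ∑ g : {g : G // g ≠ g₀}, f g.1 b ≤ 1 := fun b => by
      rw [← Fintype.sum_eq_add_sum_subtype_ne (fun g => f g b) g₀]
      exact hsum b
    have h0 : f g₀ = delta e₁ ∨ f g₀ = delta e₂ := by
      simpa [hT₀] using hf g₀
    by_cases hb1 : b = e₁
    · subst hb1
      refine (Finset.sum_congr rfl fun g _ =>
        merge_fst hee (hother g.1 _ (hf g.1))).trans_le ?_
      rw [Finset.sum_add_distrib]
      have h1 : f g₀ b + f g₀ e₂ = 1 := by
        rcases h0 with h | h <;> simp [h, delta, hee, hee.symm]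
      linarith [hsplit b, hsplit e₂]
    by_cases hb2 : b = e₂
    · subst hb2
      refine (Finset.sum_congr rfl fun g _ =>
        merge_snd hee (hother g.1 _ (hf g.1))).trans_le ?_
      simp
    · refine (Finset.sum_congr rfl fun g _ => merge_other hb1 hb2).trans_le ?_
      linarith [hsplit b, (htr g₀ _ (hf g₀) b).1]
  · rintro ⟨h, hh, hsum⟩
    choose s hs hsh using fun g => Finset.mem_image.1 (hh g)
    simp only [← hsh] at hsum
    have hnn : ∀ b, ∀ g, 0 ≤ s g b := fun b g => (htr g.1 _ (hs g) b).1
    have h12 : ∑ g, s g e₁ + ∑ g, s g e₂ ≤ 1 := by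
      rw [← Finset.sum_add_distrib]
      exact (Finset.sum_congr rfl fun g _ =>
        merge_fst hee (hother g.1 _ (hs g))).symm.trans_le (hsum e₁)
    have hrest : ∀ b, b ≠ e₁ → b ≠ e₂ → ∑ g, s g b ≤ 1 := fun b h1 h2 =>
      (Finset.sum_congr rfl fun g _ => merge_other h1 h2).symm.trans_le (hsum b)
    have key : ∀ d ∈ 𝒯 g₀, (∀ b, d b + ∑ g, s g b ≤ 1) → Solvable 𝒯 := fun d hd hle => by
      refine ⟨fun g => if hg : g ≠ g₀ then s ⟨g, hg⟩ else d, fun g => ?_, fun b => ?_⟩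
      · by_cases hg : g = g₀
        · subst hg
          simpa using hd
        · simpa [hg] using hs ⟨g, hg⟩
      · rw [Fintype.sum_eq_add_sum_subtype_ne _ g₀]
        convert hle b using 2
        · simp
        · refine Finset.sum_congr rfl fun g _ => ?_
          simp [g.2]
    have hn1 := Finset.sum_nonneg fun g (_ : g ∈ Finset.univ) => hnn e₁ g
    have hn2 := Finset.sum_nonneg fun g (_ : g ∈ Finset.univ) => hnn e₂ g
    by_cases hex : ∃ g, s g = delta e₁
    · obtain ⟨g, hg⟩ := hex
      have h1 : 1 ≤ ∑ g, s g e₁ := by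
        refine le_trans (by simp [hg, delta])
          (Finset.single_le_sum (fun g _ => hnn e₁ g) (Finset.mem_univ g))
      refine key (delta e₂) (by simp [hT₀]) fun b => ?_
      by_cases hb1 : b = e₁
      · subst hb1
        simp only [delta, hee, if_false]
        linarith
      by_cases hb2 : b = e₂
      · subst hb2
        simp only [delta, if_true]
        linarith
      · simpa [delta, hb2] using hrest b hb1 hb2
    · have h1 : ∑ g, s g e₁ = 0 := Finset.sum_eq_zero fun g _ => by
        by_contra h2
        rcases hother g.1 _ (hs g) (Or.inl h2) with h3 | h3
        · exact hex ⟨g, h3⟩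
        · simp [h3, delta, hee] at h2
      refine key (delta e₁) (by simp [hT₀]) fun b => ?_
      by_cases hb1 : b = e₁
      · subst hb1
        simp [delta, h1]
      by_cases hb2 : b = e₂
      · subst hb2
        simp only [delta, hb1, if_false]
        linarith
      · simpa [delta, hb1] using hrest b hb1 hb2
end
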